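/- arXiv:2312.07140 — 2 statements merged into one kernel-verified Lean document; each statement's English description precedes it below -/
import Mathlib

section
/- Let 𝒢 = (G_1, …, G_ℓ) be a connected temporal graph and let S be an orbit of Aut(𝒢). Let T ⊆ S and set p = (|S| − |T|)/|S|. Let W = (u_1, u_2, …) be a temporal walk starting at time step t and ending at time step t' (with t, t' ∈ [ℓ]) whose first vertex lies in S and which visits exactly k vertices of S. Then there exists a temporal walk W' starting at some vertex u' ∈ S at time step t and ending at time step t' that visits at least p·k vertices of S ∖ T. -/
/-!
The walk `W'` is the image of `W` under a well-chosen automorphism `σ` of `𝒢`, found by averaging.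
Let `A = Aut(𝒢)` and let `X ⊆ S` be the set of vertices of `S` that `W` visits. For `x, y ∈ S` the
number of `σ ∈ A` with `σ x = y` does not depend on `y` (`card_fiber_eq`), hence equals `|A| / |S|`
(`card_mul_card_fiber`). Double counting the pairs `(σ, x)` with `σ x ∈ S \ T` shows that
`|σ(X) ∩ (S \ T)|` is on average `|X| · |S \ T| / |S| = p · k`, so some `σ ∈ A` attains at least
this value (`exists_aut_card_le`).
-/

open scoped BigOperators

/-- A temporal graph on a finite vertex set `V`: a lifetime `ℓ` together with a
snapshot graph `snap t` for every time step `t` (only `t ∈ [1, ℓ]` is relevant). -/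
structure TemporalGraph (V : Type) [Fintype V] where
  lifetime : ℕ
  snap : ℕ → SimpleGraph V

namespace TemporalGraph

variable {V : Type} [Fintype V]

/-- A temporal graph is connected if every snapshot within its lifetime is connected. -/
def IsConnectedTG (𝒢 : TemporalGraph V) : Prop :=
  ∀ t, 1 ≤ t → t ≤ 𝒢.lifetime → (𝒢.snap t).Connected

/-- `W` is a temporal walk starting at time step `t` and ending at time step `t'`:
at each time step `s` with `t ≤ s < t'` it either waits or traverses an edge of
the snapshot `G_s`. -/
def IsWalk (𝒢 : TemporalGraph V) (W : ℕ → V) (t t' : ℕ) : Prop :=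
  1 ≤ t ∧ t ≤ t' ∧ t' ≤ 𝒢.lifetime ∧
    ∀ s, t ≤ s → s < t' → W (s + 1) = W s ∨ (𝒢.snap s).Adj (W s) (W (s + 1))

/-- The set of vertices visited by `W` between time steps `t` and `t'`. -/
def visited (W : ℕ → V) (t t' : ℕ) : Set V := W '' Set.Icc t t'

/-- `σ` is an automorphism of the temporal graph `𝒢`, i.e. an automorphism of
every snapshot within the lifetime. -/
def IsAut (𝒢 : TemporalGraph V) (σ : Equiv.Perm V) : Prop :=
  ∀ t, 1 ≤ t → t ≤ 𝒢.lifetime →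
    ∀ u v : V, (𝒢.snap t).Adj u v ↔ (𝒢.snap t).Adj (σ u) (σ v)

/-- The orbit of a vertex `u` under `Aut(𝒢)`. -/
def orbit (𝒢 : TemporalGraph V) (u : V) : Set V :=
  {v | ∃ σ : Equiv.Perm V, 𝒢.IsAut σ ∧ σ u = v}

/-- `S` is an orbit of `Aut(𝒢)`. -/
def IsOrbit (𝒢 : TemporalGraph V) (S : Set V) : Prop :=
  ∃ u : V, S = 𝒢.orbit u

/-- The orbit number of `𝒢`: the number of orbits of `Aut(𝒢)` on `V`. -/
noncomputable def orbitNumber (𝒢 : TemporalGraph V) : ℕ :=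
  (Set.range 𝒢.orbit).ncard

/-- Vertices reachable from `u` by a temporal walk starting at time step `t`
and ending at a time step at most `t'`. -/
def reachSet (𝒢 : TemporalGraph V) (u : V) (t t' : ℕ) : Set V :=
  {v | ∃ t'' ≤ t', ∃ W : ℕ → V, 𝒢.IsWalk W t t'' ∧ W t = u ∧ W t'' = v}

/-- `W` is a temporal walk that only traverses orbit boundary edges
(edges between two different orbits); waiting is allowed. -/
def IsBoundaryWalk (𝒢 : TemporalGraph V) (W : ℕ → V) (t t' : ℕ) : Prop :=
  1 ≤ t ∧ t ≤ t' ∧ t' ≤ 𝒢.lifetime ∧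
    ∀ s, t ≤ s → s < t' → W (s + 1) = W s ∨
      ((𝒢.snap s).Adj (W s) (W (s + 1)) ∧ 𝒢.orbit (W s) ≠ 𝒢.orbit (W (s + 1)))

/-- The lane `L_{t,t'}(X)`: all vertices reachable from some vertex of `X` by a
temporal walk starting at time step `t`, ending at a time step at most `t'`,
that only uses orbit boundary edges. -/
def lane (𝒢 : TemporalGraph V) (X : Set V) (t t' : ℕ) : Set V :=
  {v | ∃ u ∈ X, ∃ t'' ≤ t', ∃ W : ℕ → V, 𝒢.IsBoundaryWalk W t t'' ∧ W t = u ∧ W t'' = v}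

end TemporalGraph

namespace TemporalGraph

variable {V : Type} [Fintype V]

lemma IsAut.mul {𝒢 : TemporalGraph V} {σ τ : Equiv.Perm V} (hσ : 𝒢.IsAut σ) (hτ : 𝒢.IsAut τ) :
    𝒢.IsAut (σ * τ) := fun t h1 h2 u v =>
  (hτ t h1 h2 u v).trans (hσ t h1 h2 (τ u) (τ v))

lemma IsAut.inv {𝒢 : TemporalGraph V} {σ : Equiv.Perm V} (hσ : 𝒢.IsAut σ) :
    𝒢.IsAut σ⁻¹ := fun t h1 h2 u v => by
  simpa using (hσ t h1 h2 (σ⁻¹ u) (σ⁻¹ v)).symm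

lemma IsAut.apply_mem {𝒢 : TemporalGraph V} {S : Set V} (hS : 𝒢.IsOrbit S) {σ : Equiv.Perm V}
    (hσ : 𝒢.IsAut σ) {x : V} (hx : x ∈ S) : σ x ∈ S := by
  obtain ⟨u, rfl⟩ := hS
  obtain ⟨τ, hτ, rfl⟩ := hx
  exact ⟨σ * τ, hσ.mul hτ, rfl⟩

lemma IsOrbit.exists_aut {𝒢 : TemporalGraph V} {S : Set V} (hS : 𝒢.IsOrbit S) {x y : V}
    (hx : x ∈ S) (hy : y ∈ S) : ∃ σ, 𝒢.IsAut σ ∧ σ x = y := by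
  obtain ⟨u, rfl⟩ := hS
  obtain ⟨τ, hτ, rfl⟩ := hx
  obtain ⟨ρ, hρ, rfl⟩ := hy
  exact ⟨ρ * τ⁻¹, hρ.mul hτ.inv, by simp⟩

lemma IsAut.isWalk {𝒢 : TemporalGraph V} {σ : Equiv.Perm V} (hσ : 𝒢.IsAut σ) {W : ℕ → V}
    {t t' : ℕ} (hW : 𝒢.IsWalk W t t') : 𝒢.IsWalk (fun s => σ (W s)) t t' := by
  obtain ⟨h1, h2, h3, h⟩ := hW
  refine ⟨h1, h2, h3, fun s hs hs' => ?_⟩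
  rcases h s hs hs' with h | h
  · exact Or.inl (congrArg σ h)
  · exact Or.inr ((hσ s (h1.trans hs) (hs'.le.trans h3) _ _).1 h)

open Classical in
/-- The automorphism group of `𝒢`, as a finite set of permutations. -/
noncomputable def autFinset (𝒢 : TemporalGraph V) : Finset (Equiv.Perm V) :=
  Finset.univ.filter 𝒢.IsAut

open Classical in
lemma mem_autFinset {𝒢 : TemporalGraph V} {σ : Equiv.Perm V} : σ ∈ 𝒢.autFinset ↔ 𝒢.IsAut σ := by
  simp [autFinset]

open Classical in
/-- Composing with an automorphism that takes `y` to `z` is a bijection between the automorphisms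
taking `x` to `y` and those taking `x` to `z`. -/
lemma card_fiber_eq {𝒢 : TemporalGraph V} {S : Set V} (hS : 𝒢.IsOrbit S) (x : V) {y z : V}
    (hy : y ∈ S) (hz : z ∈ S) :
    (𝒢.autFinset.filter (fun σ => σ x = y)).card = (𝒢.autFinset.filter (fun σ => σ x = z)).card := by
  obtain ⟨τ, hτ, rfl⟩ := hS.exists_aut hy hz
  refine Finset.card_bij' (fun σ _ => τ * σ) (fun σ _ => τ⁻¹ * σ) ?_ ?_ ?_ ?_
  · intro σ hσ
    simp only [Finset.mem_filter, mem_autFinset] at hσ ⊢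
    exact ⟨hτ.mul hσ.1, by simp [hσ.2]⟩
  · intro σ hσ
    simp only [Finset.mem_filter, mem_autFinset] at hσ ⊢
    exact ⟨hτ.inv.mul hσ.1, by simp [hσ.2]⟩
  · intro σ _
    simp
  · intro σ _
    simp

open Classical in
lemma card_mul_card_fiber {𝒢 : TemporalGraph V} {S : Finset V} (hS : 𝒢.IsOrbit (S : Set V))
    {x y : V} (hx : x ∈ S) (hy : y ∈ S) :
    S.card * (𝒢.autFinset.filter (fun σ => σ x = y)).card = 𝒢.autFinset.card := by
  have h := Finset.card_eq_sum_card_fiberwise (s := 𝒢.autFinset) (t := S)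
    (f := fun σ : Equiv.Perm V => σ x)
    (fun σ hσ => (mem_autFinset.1 hσ).apply_mem hS hx)
  rw [h, Finset.sum_congr rfl fun z hz => card_fiber_eq hS x hz hy]
  simp

open Classical in
/-- The averaging step: some automorphism moves at least the expected number of elements of `X`
into `Y`. -/
lemma exists_aut_card_le {𝒢 : TemporalGraph V} {S X Y : Finset V} (hS : 𝒢.IsOrbit (S : Set V))
    (hX : X ⊆ S) (hY : Y ⊆ S) :
    ∃ σ, 𝒢.IsAut σ ∧ Y.card * X.card ≤ S.card * (X.filter (fun x => σ x ∈ Y)).card := by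
  have hne : 𝒢.autFinset.Nonempty := ⟨1, mem_autFinset.2 fun t _ _ u v => Iff.rfl⟩
  have hfib : ∀ x ∈ X, S.card * (𝒢.autFinset.filter (fun σ => σ x ∈ Y)).card
      = Y.card * 𝒢.autFinset.card := by
    intro x hx
    have h := Finset.card_eq_sum_card_fiberwise (s := 𝒢.autFinset.filter (fun σ => σ x ∈ Y))
      (t := Y) (f := fun σ : Equiv.Perm V => σ x) (fun σ hσ => (Finset.mem_filter.1 hσ).2)
    rw [h, Finset.mul_sum, ← smul_eq_mul, ← Finset.sum_const]
    refine Finset.sum_congr rfl fun y hy => ?_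
    rw [← card_mul_card_fiber hS (hX hx) (hY hy), Finset.filter_filter]
    congr 2
    ext σ
    simp only [Finset.mem_filter]
    grind
  -- Double counting of the pairs `(σ, x)` with `σ x ∈ Y`.
  have hcount : ∑ σ ∈ 𝒢.autFinset, (X.filter (fun x => σ x ∈ Y)).card
      = ∑ x ∈ X, (𝒢.autFinset.filter (fun σ => σ x ∈ Y)).card :=
    Finset.sum_card_bipartiteAbove_eq_sum_card_bipartiteBelow
      (fun (σ : Equiv.Perm V) (x : V) => σ x ∈ Y)
  obtain ⟨σ, hσ, h⟩ := Finset.exists_le_of_sum_le (s := 𝒢.autFinset)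
    (f := fun _ => Y.card * X.card)
    (g := fun σ => S.card * (X.filter (fun x => σ x ∈ Y)).card) hne (by
      rw [← Finset.mul_sum _ _ S.card, hcount, Finset.mul_sum, Finset.sum_congr rfl hfib]
      simp only [Finset.sum_const, smul_eq_mul]
      exact le_of_eq (by ring))
  exact ⟨σ, mem_autFinset.1 hσ, h⟩

end TemporalGraph

/-- Lemma 3.2: given `T ⊆ S` with `p = (|S| - |T|)/|S|` and a temporal
walk `W` from time `t` to `t'` starting in `S` and visiting exactly `k` vertices of `S`,
there is a temporal walk `W'` from `t` to `t'` starting at some vertex of `S` that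
visits at least `p·k` vertices of `S \ T`. -/
theorem transform_walk {V : Type} [Fintype V] (𝒢 : TemporalGraph V)
    (hconn : 𝒢.IsConnectedTG) (S : Set V) (hS : 𝒢.IsOrbit S)
    (T : Set V) (hT : T ⊆ S) (p : ℝ)
    (hp : p = ((S.ncard : ℝ) - (T.ncard : ℝ)) / (S.ncard : ℝ))
    (W : ℕ → V) (t t' : ℕ) (hW : 𝒢.IsWalk W t t') (hstart : W t ∈ S)
    (k : ℕ) (hk : (TemporalGraph.visited W t t' ∩ S).ncard = k) :
    ∃ W' : ℕ → V, 𝒢.IsWalk W' t t' ∧ W' t ∈ S ∧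
      p * (k : ℝ) ≤ ((TemporalGraph.visited W' t t' ∩ (S \ T)).ncard : ℝ) := by
  classical
  have hSf : 𝒢.IsOrbit (S.toFinset : Set V) := by simpa using hS
  obtain ⟨σ, hσ, h⟩ := TemporalGraph.exists_aut_card_le (S := S.toFinset)
    (X := (TemporalGraph.visited W t t' ∩ S).toFinset) (Y := (S \ T).toFinset) hSf
    (Set.toFinset_subset_toFinset.2 Set.inter_subset_right)
    (Set.toFinset_subset_toFinset.2 Set.sdiff_subset)
  refine ⟨fun s => σ (W s), hσ.isWalk hW, hσ.apply_mem hS hstart, ?_⟩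
  have hle : ((TemporalGraph.visited W t t' ∩ S).toFinset.filter
      (fun x => σ x ∈ (S \ T).toFinset)).card
      ≤ (TemporalGraph.visited (fun s => σ (W s)) t t' ∩ (S \ T)).ncard := by
    rw [← Set.ncard_coe_finset, ← Set.ncard_image_of_injective _ σ.injective]
    refine Set.ncard_le_ncard ?_ (Set.toFinite _)
    rintro _ ⟨x, hx, rfl⟩
    simp only [Finset.coe_filter, Set.mem_toFinset, Set.mem_ofPred_eq] at hx
    obtain ⟨⟨⟨s, hs, rfl⟩, -⟩, hx⟩ := hx
    exact ⟨⟨s, hs, rfl⟩, hx⟩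
  rw [← Set.ncard_eq_toFinset_card', ← Set.ncard_eq_toFinset_card',
    ← Set.ncard_eq_toFinset_card', hk] at h
  have hdiff := Set.ncard_sdiff_add_ncard_of_subset hT (Set.toFinite _)
  have hpos : 0 < S.ncard := (Set.ncard_pos (Set.toFinite _)).2 ⟨_, hstart⟩
  have h' : ((S \ T).ncard : ℝ) * k ≤ S.ncard *
      ((TemporalGraph.visited (fun s => σ (W s)) t t' ∩ (S \ T)).ncard : ℝ) := by
    exact_mod_cast h.trans (Nat.mul_le_mul_left _ hle)
  have hsub : (S.ncard : ℝ) - T.ncard = ((S \ T).ncard : ℝ) := by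
    rw [← hdiff]; push_cast; ring
  have hposR : (0 : ℝ) < S.ncard := by exact_mod_cast hpos
  rw [hp, hsub, div_mul_eq_mul_div, div_le_iff₀ hposR]
  linarith
end

section
/- Let 𝒢 = (G_1, …, G_ℓ) be a connected temporal graph with orbit number r = |𝒢/Aut(𝒢)|, and let S be an orbit of Aut(𝒢). For any X ⊆ S, any orbit S' of Aut(𝒢), and any t ∈ [ℓ] with t + r ≤ ℓ, the lane L_{t, t+r}(X) satisfies |L_{t, t+r}(X) ∩ S'| ≥ ⌈|X| · |S'| / |S|⌉. -/
/-!
Call an orbit `O` *saturated* by time `s` if the part of `O` reached by the lane has density at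
least `|X| / |S|` in `O`. The orbit `S` is saturated at time `t`. Within a snapshot, two orbits
`O`, `O'` joined by an edge span a biregular bipartite graph, because automorphisms act
transitively on both sides; double counting its edges (`expansion`) shows that the neighbours of
`Y ⊆ O` have density at least `|Y| / |O|` in `O'`. Since every snapshot is connected, as long as
some orbit is not saturated there is an edge from a saturated orbit to an unsaturated one
(`exists_crossing`), it is an orbit boundary edge, and so one further time step saturates the
latter orbit as well (`saturated_growth`). With `r` orbits in total, all are saturated by `t + r`.
-/

open scoped BigOperators

namespace TemporalGraph

variable {V : Type} [Fintype V]

/-! ### Orbits of the automorphism group -/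

lemma IsAut.symm {𝒢 : TemporalGraph V} {σ : Equiv.Perm V} (h : 𝒢.IsAut σ) :
    𝒢.IsAut σ.symm := by
  intro t h1 h2 u v
  have := h t h1 h2 (σ.symm u) (σ.symm v)
  simpa using this.symm

lemma IsAut.trans {𝒢 : TemporalGraph V} {σ τ : Equiv.Perm V} (h : 𝒢.IsAut σ)
    (h' : 𝒢.IsAut τ) : 𝒢.IsAut (σ.trans τ) := by
  intro t h1 h2 u v
  exact (h t h1 h2 u v).trans (h' t h1 h2 _ _)

lemma mem_orbit_self (𝒢 : TemporalGraph V) (u : V) : u ∈ 𝒢.orbit u :=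
  ⟨Equiv.refl V, fun _ _ _ _ _ => Iff.rfl, rfl⟩

lemma orbit_eq_of_mem {𝒢 : TemporalGraph V} {u v : V} (h : v ∈ 𝒢.orbit u) :
    𝒢.orbit v = 𝒢.orbit u := by
  obtain ⟨σ, hσ, rfl⟩ := h
  ext w
  constructor
  · rintro ⟨τ, hτ, rfl⟩
    exact ⟨σ.trans τ, hσ.trans hτ, rfl⟩
  · rintro ⟨τ, hτ, rfl⟩
    exact ⟨σ.symm.trans τ, hσ.symm.trans hτ, by simp⟩

lemma mem_orbit_iff {𝒢 : TemporalGraph V} {u v : V} :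
    v ∈ 𝒢.orbit u ↔ 𝒢.orbit v = 𝒢.orbit u :=
  ⟨orbit_eq_of_mem, fun h => h ▸ mem_orbit_self 𝒢 v⟩

lemma IsAut.orbit_apply {𝒢 : TemporalGraph V} {σ : Equiv.Perm V} (h : 𝒢.IsAut σ) (u : V) :
    𝒢.orbit (σ u) = 𝒢.orbit u :=
  orbit_eq_of_mem ⟨σ, h, rfl⟩

/-! ### Biregularity between orbits -/

/-- Vertices of the same orbit have equally many neighbours in the orbit of `b`, because an
automorphism carrying one vertex to the other preserves adjacency and every orbit. -/
lemma card_nbrs_eq (𝒢 : TemporalGraph V) {s : ℕ} (h1 : 1 ≤ s)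
    (h2 : s ≤ 𝒢.lifetime) {u u' : V} (b : V) (h : u' ∈ 𝒢.orbit u) :
    {w | w ∈ 𝒢.orbit b ∧ (𝒢.snap s).Adj u' w}.ncard =
      {w | w ∈ 𝒢.orbit b ∧ (𝒢.snap s).Adj u w}.ncard := by
  obtain ⟨σ, hσ, rfl⟩ := h
  rw [← Set.ncard_image_of_injective {w | w ∈ 𝒢.orbit b ∧ (𝒢.snap s).Adj u w} σ.injective]
  congr 1
  ext w
  simp only [Set.mem_ofPred_eq, Set.mem_image]
  constructor
  · rintro ⟨hw, ha⟩
    refine ⟨σ.symm w, ⟨?_, ?_⟩, by simp⟩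
    · rw [mem_orbit_iff, hσ.symm.orbit_apply, ← mem_orbit_iff]
      exact hw
    · rw [hσ s h1 h2]
      simpa using ha
  · rintro ⟨v, ⟨hv, ha⟩, rfl⟩
    refine ⟨?_, (hσ s h1 h2 _ _).1 ha⟩
    rw [mem_orbit_iff, hσ.orbit_apply, ← mem_orbit_iff]
    exact hv

/-- If some edge of the snapshot joins the orbits of `a` and `b`, then passing to neighbours does
not decrease density: the neighbours of `Y ⊆ orbit a` fill at least the fraction `|Y| / |orbit a|`
of `orbit b`. This is double counting in the biregular bipartite graph between the two orbits. -/
lemma expansion (𝒢 : TemporalGraph V) {s : ℕ} (h1 : 1 ≤ s) (h2 : s ≤ 𝒢.lifetime) {a b : V}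
    (hab : (𝒢.snap s).Adj a b) (Y : Set V) (hY : Y ⊆ 𝒢.orbit a) :
    Y.ncard * (𝒢.orbit b).ncard ≤
      {w | w ∈ 𝒢.orbit b ∧ ∃ y ∈ Y, (𝒢.snap s).Adj y w}.ncard * (𝒢.orbit a).ncard := by
  classical
  set N : Set V := {w | w ∈ 𝒢.orbit b ∧ ∃ y ∈ Y, (𝒢.snap s).Adj y w} with hN
  set d := {w | w ∈ 𝒢.orbit b ∧ (𝒢.snap s).Adj a w}.ncard with hd
  set e := {w | w ∈ 𝒢.orbit a ∧ (𝒢.snap s).Adj b w}.ncard with he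
  have hep : 0 < e := by
    rw [he, Set.ncard_pos]
    exact ⟨a, mem_orbit_self 𝒢 a, hab.symm⟩
  have hda : ∀ u ∈ 𝒢.orbit a,
      ((𝒢.orbit b).toFinset.bipartiteAbove (𝒢.snap s).Adj u).card = d := by
    intro u hu
    rw [hd, ← card_nbrs_eq 𝒢 h1 h2 b hu, ← Set.ncard_coe_finset]
    congr 1
    ext w
    simp [Finset.bipartiteAbove]
  have heb : ∀ w ∈ 𝒢.orbit b,
      ((𝒢.orbit a).toFinset.bipartiteBelow (𝒢.snap s).Adj w).card = e := by
    intro w hw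
    rw [he, ← card_nbrs_eq 𝒢 h1 h2 a hw, ← Set.ncard_coe_finset]
    congr 1
    ext v
    simp [Finset.bipartiteBelow, SimpleGraph.adj_comm]
  have hfull : (𝒢.orbit a).ncard * d = (𝒢.orbit b).ncard * e := by
    rw [Set.ncard_eq_toFinset_card', Set.ncard_eq_toFinset_card']
    exact Finset.card_mul_eq_card_mul (𝒢.snap s).Adj
      (fun u hu => hda u (by simpa using hu)) (fun w hw => heb w (by simpa using hw))
  have hpart : Y.ncard * d ≤ N.ncard * e := by
    rw [Set.ncard_eq_toFinset_card', Set.ncard_eq_toFinset_card']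
    refine Finset.card_mul_le_card_mul (𝒢.snap s).Adj ?_ ?_
    · intro u hu
      have hu : u ∈ Y := by simpa using hu
      rw [← hda u (hY hu)]
      refine Finset.card_le_card fun w hw => ?_
      simp only [Finset.bipartiteAbove, Finset.mem_filter, Set.mem_toFinset] at hw ⊢
      exact ⟨⟨hw.1, u, hu, hw.2⟩, hw.2⟩
    · intro w hw
      have hw : w ∈ N := by simpa using hw
      rw [← heb w hw.1]
      refine Finset.card_le_card fun v hv => ?_
      simp only [Finset.bipartiteBelow, Finset.mem_filter, Set.mem_toFinset] at hv ⊢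
      exact ⟨hY hv.1, hv.2⟩
  refine Nat.le_of_mul_le_mul_right (?_ : _ * e ≤ _ * e) hep
  calc Y.ncard * (𝒢.orbit b).ncard * e = Y.ncard * d * (𝒢.orbit a).ncard := by
        rw [mul_assoc, ← hfull]; ring
    _ ≤ N.ncard * e * (𝒢.orbit a).ncard := Nat.mul_le_mul_right _ hpart
    _ = N.ncard * (𝒢.orbit a).ncard * e := by ring

/-! ### Growth of lanes -/

lemma subset_lane {𝒢 : TemporalGraph V} {X : Set V} {t : ℕ} (ht : 1 ≤ t)
    (h : t ≤ 𝒢.lifetime) : X ⊆ 𝒢.lane X t t := fun u hu =>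
  ⟨u, hu, t, le_rfl, fun _ => u, ⟨ht, le_rfl, h, fun _ _ _ => Or.inl rfl⟩, rfl, rfl⟩

lemma lane_mono {𝒢 : TemporalGraph V} {X : Set V} {t a b : ℕ} (h : a ≤ b) :
    𝒢.lane X t a ⊆ 𝒢.lane X t b := by
  rintro v ⟨u, hu, t'', ht'', W, hW⟩
  exact ⟨u, hu, t'', ht''.trans h, W, hW⟩

lemma lane_step {𝒢 : TemporalGraph V} {X : Set V} {t s : ℕ} {v w : V}
    (hs : s + 1 ≤ 𝒢.lifetime) (hv : v ∈ 𝒢.lane X t s) (hadj : (𝒢.snap s).Adj v w)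
    (hne : 𝒢.orbit v ≠ 𝒢.orbit w) : w ∈ 𝒢.lane X t (s + 1) := by
  obtain ⟨u, hu, t'', ht'', W, ⟨h1, h2, h3, h4⟩, hWt, hWv⟩ := hv
  refine ⟨u, hu, s + 1, le_rfl, fun i => if i ≤ t'' then W i else if i ≤ s then v else w,
    ⟨h1, by omega, hs, ?_⟩, ?_, ?_⟩
  · intro i hi1 hi2
    rcases lt_trichotomy i t'' with hlt | rfl | hgt
    · have e1 : i ≤ t'' := by omega
      have e2 : i + 1 ≤ t'' := by omega
      simpa only [e1, e2, if_true] using h4 i hi1 hlt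
    · by_cases hse : i = s
      · subst hse
        right
        simp [hWv, hadj, hne]
      · left
        have e : i + 1 ≤ s := by omega
        simp [e, hWv]
    · have e1 : ¬ i ≤ t'' := by omega
      have e2 : ¬ i + 1 ≤ t'' := by omega
      by_cases hse : i = s
      · subst hse
        right
        simp [e1, e2, hadj, hne]
      · left
        have e3 : i + 1 ≤ s := by omega
        have e4 : i ≤ s := by omega
        simp [e1, e2, e3, e4]
  · simp [h2, hWt]
  · have e1 : ¬ s + 1 ≤ t'' := by omega
    simp [e1]

/-- The orbits in which `R` has density at least `x / y`, with denominators cleared. -/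
def saturated (𝒢 : TemporalGraph V) (x y : ℕ) (R : Set V) : Set (Set V) :=
  {O | O ∈ Set.range 𝒢.orbit ∧ x * O.ncard ≤ (R ∩ O).ncard * y}

/-- In a connected graph a nonempty, not full family `A` of orbits is left by some edge. -/
lemma exists_crossing (𝒢 : TemporalGraph V) {G : SimpleGraph V} (hG : G.Connected)
    (A : Set (Set V)) {u v : V} (hu : 𝒢.orbit u ∈ A) (hv : 𝒢.orbit v ∉ A) :
    ∃ a b, G.Adj a b ∧ 𝒢.orbit a ∈ A ∧ 𝒢.orbit b ∉ A := by
  obtain ⟨p⟩ := hG.preconnected u v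
  obtain ⟨d, _, h1, h2⟩ := p.exists_boundary_dart {x | 𝒢.orbit x ∈ A} hu hv
  exact ⟨d.fst, d.snd, d.adj, h1, h2⟩

/-- The starting orbit is always saturated, and each time step saturates at least one more orbit
until all are: after `k` steps either every orbit or at least `k + 1` orbits are saturated. -/
lemma saturated_growth (𝒢 : TemporalGraph V) (hconn : 𝒢.IsConnectedTG) {u₀ : V} {X : Set V}
    (hX : X ⊆ 𝒢.orbit u₀) {t : ℕ} (ht : 1 ≤ t) (k : ℕ) (hk : t + k ≤ 𝒢.lifetime) :
    𝒢.orbit u₀ ∈ 𝒢.saturated X.ncard (𝒢.orbit u₀).ncard (𝒢.lane X t (t + k)) ∧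
    (𝒢.saturated X.ncard (𝒢.orbit u₀).ncard (𝒢.lane X t (t + k)) = Set.range 𝒢.orbit ∨
      k + 1 ≤ (𝒢.saturated X.ncard (𝒢.orbit u₀).ncard (𝒢.lane X t (t + k))).ncard) := by
  induction k with
  | zero =>
    have hmem : 𝒢.orbit u₀ ∈
        𝒢.saturated X.ncard (𝒢.orbit u₀).ncard (𝒢.lane X t (t + 0)) := by
      refine ⟨⟨u₀, rfl⟩, Nat.mul_le_mul_right _ (Set.ncard_le_ncard ?_)⟩
      exact Set.subset_inter (subset_lane ht hk) hX
    refine ⟨hmem, Or.inr ?_⟩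
    rw [zero_add, Nat.one_le_iff_ne_zero, ← Nat.pos_iff_ne_zero, Set.ncard_pos]
    exact ⟨_, hmem⟩
  | succ k ih =>
    obtain ⟨hmem, hcard⟩ := ih (by omega)
    set A := 𝒢.saturated X.ncard (𝒢.orbit u₀).ncard (𝒢.lane X t (t + k)) with hA
    set B := 𝒢.saturated X.ncard (𝒢.orbit u₀).ncard (𝒢.lane X t (t + (k + 1))) with hB
    have hAB : A ⊆ B := by
      rintro O ⟨hO, hle⟩
      refine ⟨hO, hle.trans (Nat.mul_le_mul_right _ (Set.ncard_le_ncard ?_))⟩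
      exact Set.inter_subset_inter_left _ (lane_mono (by omega))
    have hBr : B ⊆ Set.range 𝒢.orbit := fun O hO => hO.1
    refine ⟨hAB hmem, ?_⟩
    by_cases hfull : A = Set.range 𝒢.orbit
    · exact Or.inl (hBr.antisymm (hfull ▸ hAB))
    have hcard' := hcard.resolve_left hfull
    obtain ⟨v, hv⟩ : ∃ v, 𝒢.orbit v ∉ A := by
      by_contra! hall
      refine hfull (Set.Subset.antisymm (fun O hO => hO.1) ?_)
      rintro _ ⟨v, rfl⟩
      exact hall v
    obtain ⟨a, b, hadj, ha, hb⟩ :=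
      exists_crossing 𝒢 (hconn (t + k) (by omega) (by omega)) A hmem hv
    have hexp := expansion 𝒢 (s := t + k) (by omega) (by omega) hadj
      (𝒢.lane X t (t + k) ∩ 𝒢.orbit a) Set.inter_subset_right
    set N := {w | w ∈ 𝒢.orbit b ∧
      ∃ y ∈ 𝒢.lane X t (t + k) ∩ 𝒢.orbit a, (𝒢.snap (t + k)).Adj y w}
    have hNsub : N ⊆ 𝒢.lane X t (t + (k + 1)) ∩ 𝒢.orbit b := by
      rintro w ⟨hw, y, ⟨hy, hya⟩, hyw⟩
      refine ⟨lane_step hk hy hyw ?_, hw⟩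
      rw [orbit_eq_of_mem hya, orbit_eq_of_mem hw]
      exact fun h => hb (h ▸ ha)
    have hapos : 0 < (𝒢.orbit a).ncard := by
      rw [Set.ncard_pos]
      exact ⟨a, mem_orbit_self 𝒢 a⟩
    have hbB : 𝒢.orbit b ∈ B := by
      refine ⟨⟨b, rfl⟩, ?_⟩
      refine le_trans ?_ (Nat.mul_le_mul_right _ (Set.ncard_le_ncard hNsub))
      refine Nat.le_of_mul_le_mul_right ?_ hapos
      calc X.ncard * (𝒢.orbit b).ncard * (𝒢.orbit a).ncard
          = X.ncard * (𝒢.orbit a).ncard * (𝒢.orbit b).ncard := by ring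
        _ ≤ (𝒢.lane X t (t + k) ∩ 𝒢.orbit a).ncard * (𝒢.orbit u₀).ncard
              * (𝒢.orbit b).ncard := Nat.mul_le_mul_right _ ha.2
        _ = (𝒢.lane X t (t + k) ∩ 𝒢.orbit a).ncard * (𝒢.orbit b).ncard
              * (𝒢.orbit u₀).ncard := by ring
        _ ≤ N.ncard * (𝒢.orbit a).ncard * (𝒢.orbit u₀).ncard := Nat.mul_le_mul_right _ hexp
        _ = N.ncard * (𝒢.orbit u₀).ncard * (𝒢.orbit a).ncard := by ring
    have hlt : A.ncard < B.ncard :=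
      Set.ncard_lt_ncard ⟨hAB, fun h => hb (h hbB)⟩
    right
    omega

end TemporalGraph

/-- Lemma 4.2, Reachability between Orbits: for orbits `S, S'`, any
`X ⊆ S` and any time step `t` with `t + r ≤ ℓ` (where `r` is the orbit number), the
lane `L_{t,t+r}(X)` contains at least `⌈|X|·|S'|/|S|⌉` vertices of `S'`. -/
theorem lane_orbit_reachability {V : Type} [Fintype V] (𝒢 : TemporalGraph V)
    (hconn : 𝒢.IsConnectedTG) (r : ℕ) (hr : r = 𝒢.orbitNumber)
    (S S' : Set V) (hS : 𝒢.IsOrbit S) (hS' : 𝒢.IsOrbit S')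
    (X : Set V) (hX : X ⊆ S)
    (t : ℕ) (ht : 1 ≤ t) (htr : t + r ≤ 𝒢.lifetime) :
    ⌈((X.ncard : ℝ) * (S'.ncard : ℝ)) / (S.ncard : ℝ)⌉₊
      ≤ (𝒢.lane X t (t + r) ∩ S').ncard := by
  obtain ⟨u₀, rfl⟩ := hS
  obtain ⟨b, rfl⟩ := hS'
  have hpos : 0 < (𝒢.orbit u₀).ncard := by
    rw [Set.ncard_pos]
    exact ⟨u₀, TemporalGraph.mem_orbit_self 𝒢 u₀⟩
  have hall : 𝒢.saturated X.ncard (𝒢.orbit u₀).ncard (𝒢.lane X t (t + r))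
      = Set.range 𝒢.orbit := by
    -- A family of at least `r + 1` orbits is impossible, since there are only `r` orbits.
    refine (𝒢.saturated_growth hconn hX ht r htr).2.resolve_right fun h => ?_
    have hle := Set.ncard_le_ncard (s := 𝒢.saturated X.ncard (𝒢.orbit u₀).ncard
      (𝒢.lane X t (t + r))) (t := Set.range 𝒢.orbit) (fun O hO => hO.1)
    rw [TemporalGraph.orbitNumber] at hr
    omega
  have hb : 𝒢.orbit b ∈ 𝒢.saturated X.ncard (𝒢.orbit u₀).ncard (𝒢.lane X t (t + r)) :=
    hall ▸ ⟨b, rfl⟩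
  rw [Nat.ceil_le, div_le_iff₀ (by exact_mod_cast hpos)]
  exact_mod_cast hb.2
end
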